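/- Let μ1, μ2 ∈ P_2(ℝ^d) and θ ∈ S^{d−1}. Then the set of Wasserstein means M(Q_θ#μ1, Q_θ#μ2) is a singleton {μ_θ[μ1,μ2]}, where μ_θ[μ1,μ2] is the pushforward of Lebesgue measure on [0,1] by the map t ↦ ((1/2)F_{ν1}^{[-1]}(t) + (1/2)F_{ν2}^{[-1]}(t))·θ, with ν_i = P_θ#μ_i for i = 1,2. -/

import Mathlib

open MeasureTheory Filter Topology ProbabilityTheory
open scoped ENNReal RealInnerProductSpace Classical

noncomputable section

/-- Euclidean space ℝ^d. -/
abbrev Euc (d : ℕ) : Type := EuclideanSpace ℝ (Fin d)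

/-- `P2` : Borel probability measures with finite second moment. -/
def P2 {E : Type*} [NormedAddCommGroup E] [MeasurableSpace E] : Set (Measure E) :=
  {μ | IsProbabilityMeasure μ ∧ Integrable (fun x => ‖x‖ ^ 2) μ}

/-- Couplings between two measures. -/
def Coupling {E F : Type*} [MeasurableSpace E] [MeasurableSpace F]
    (μ : Measure E) (ν : Measure F) : Set (Measure (E × F)) :=
  {π | IsProbabilityMeasure π ∧ π.map Prod.fst = μ ∧ π.map Prod.snd = ν}

/-- Quadratic transport cost of a plan. -/
def tCost {E : Type*} [NormedAddCommGroup E] [MeasurableSpace E]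
    (π : Measure (E × E)) : ℝ :=
  ∫ p, ‖p.1 - p.2‖ ^ 2 ∂π

/-- Squared 2-Wasserstein distance. -/
def W2sq {E : Type*} [NormedAddCommGroup E] [MeasurableSpace E] (μ ν : Measure E) : ℝ :=
  sInf (tCost '' Coupling μ ν)

/-- 2-Wasserstein distance. -/
def W2 {E : Type*} [NormedAddCommGroup E] [MeasurableSpace E] (μ ν : Measure E) : ℝ :=
  Real.sqrt (W2sq μ ν)

/-- Optimal transport plans for the quadratic cost. -/
def OptPlan {E : Type*} [NormedAddCommGroup E] [MeasurableSpace E]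
    (μ ν : Measure E) : Set (Measure (E × E)) :=
  {π | π ∈ Coupling μ ν ∧ tCost π = W2sq μ ν}

/-- `Gamma ν μ1 μ2` : probability measures on `E × E × E` whose (1,2)-marginal is an optimal
plan between `ν` and `μ1` and whose (1,3)-marginal is an optimal plan between `ν` and `μ2`. -/
def Gamma {E : Type*} [NormedAddCommGroup E] [MeasurableSpace E]
    (ν μ1 μ2 : Measure E) : Set (Measure (E × E × E)) :=
  {ρ | IsProbabilityMeasure ρ ∧
    ρ.map (fun p => (p.1, p.2.1)) ∈ OptPlan ν μ1 ∧
    ρ.map (fun p => (p.1, p.2.2)) ∈ OptPlan ν μ2}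

/-- Cost `∫ ‖x1 − x2‖² dρ(y, x1, x2)` of a 3-plan. -/
def pivotCost {E : Type*} [NormedAddCommGroup E] [MeasurableSpace E]
    (ρ : Measure (E × E × E)) : ℝ :=
  ∫ p, ‖p.2.1 - p.2.2‖ ^ 2 ∂ρ

/-- Squared ν-based Wasserstein discrepancy. -/
def Wnusq {E : Type*} [NormedAddCommGroup E] [MeasurableSpace E]
    (ν μ1 μ2 : Measure E) : ℝ :=
  sInf (pivotCost '' Gamma ν μ1 μ2)

/-- ν-based Wasserstein discrepancy. -/
def Wnu {E : Type*} [NormedAddCommGroup E] [MeasurableSpace E]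
    (ν μ1 μ2 : Measure E) : ℝ :=
  Real.sqrt (Wnusq ν μ1 μ2)

/-- Weak convergence of a sequence of measures (against bounded continuous functions). -/
def WeakConv {E : Type*} [MeasurableSpace E] [TopologicalSpace E]
    (μs : ℕ → Measure E) (μ : Measure E) : Prop :=
  ∀ f : BoundedContinuousFunction E ℝ,
    Tendsto (fun n => ∫ x, f x ∂(μs n)) atTop (𝓝 (∫ x, f x ∂μ))

/-- Quantile function (pseudo-inverse c.d.f.) of a measure on ℝ. -/
def quantile (ν : Measure ℝ) (t : ℝ) : ℝ :=
  sInf {s : ℝ | ENNReal.ofReal t ≤ ν (Set.Iic s)}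

/-- Pushforward of `μ` by the projection `P_θ : x ↦ ⟪θ, x⟫`. -/
def projLine {d : ℕ} (θ : Euc d) (μ : Measure (Euc d)) : Measure ℝ :=
  μ.map (fun x => ⟪θ, x⟫)

/-- `μ_θ[μ1, μ2]` : the (unique) Wasserstein mean of `Q_θ#μ1` and `Q_θ#μ2`, given by the
explicit quantile formula `[(½ F_{ν1}^{[-1]} + ½ F_{ν2}^{[-1]})·θ]#L_{[0,1]}`. -/
def pivotMiddle {d : ℕ} (θ : Euc d) (μ1 μ2 : Measure (Euc d)) : Measure (Euc d) :=
  (volume.restrict (Set.Icc (0 : ℝ) 1)).map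
    (fun t => ((1 / 2) * quantile (projLine θ μ1) t
      + (1 / 2) * quantile (projLine θ μ2) t) • θ)

/-- Squared Pivot Sliced discrepancy. -/
def PSsq {d : ℕ} (θ : Euc d) (μ1 μ2 : Measure (Euc d)) : ℝ :=
  Wnusq (pivotMiddle θ μ1 μ2) μ1 μ2

/-- Pivot Sliced discrepancy. -/
def PS {d : ℕ} (θ : Euc d) (μ1 μ2 : Measure (Euc d)) : ℝ :=
  Real.sqrt (PSsq θ μ1 μ2)

/-- `π_θ[μ1, μ2]` : the unique optimal 1D plan between `P_θ#μ1` and `P_θ#μ2`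
(co-monotone quantile coupling). -/
def piTheta {d : ℕ} (θ : Euc d) (μ1 μ2 : Measure (Euc d)) : Measure (ℝ × ℝ) :=
  (volume.restrict (Set.Icc (0 : ℝ) 1)).map
    (fun t => (quantile (projLine θ μ1) t, quantile (projLine θ μ2) t))

/-- `Ω_θ(μ1, μ2)` : couplings of `μ1, μ2` whose projection by `(P_θ, P_θ)` is `π_θ[μ1, μ2]`. -/
def OmegaTheta {d : ℕ} (θ : Euc d) (μ1 μ2 : Measure (Euc d)) :
    Set (Measure (Euc d × Euc d)) :=
  {ω | ω ∈ Coupling μ1 μ2 ∧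
    ω.map (fun p => (⟪θ, p.1⟫, ⟪θ, p.2⟫)) = piTheta θ μ1 μ2}

/-- Squared constrained Wasserstein discrepancy `CW_θ²`. -/
def CWsq {d : ℕ} (θ : Euc d) (μ1 μ2 : Measure (Euc d)) : ℝ :=
  sInf (tCost '' OmegaTheta θ μ1 μ2)

/-- Wasserstein means: minimisers of `μ ↦ W₂²(μ1, μ) + W₂²(μ, μ2)` over `P2`. -/
def WMean {d : ℕ} (μ1 μ2 : Measure (Euc d)) : Set (Measure (Euc d)) :=
  {μ | μ ∈ (P2 : Set (Measure (Euc d))) ∧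
    ∀ μ' ∈ (P2 : Set (Measure (Euc d))),
      W2sq μ1 μ + W2sq μ μ2 ≤ W2sq μ1 μ' + W2sq μ' μ2}

/-- Uniform empirical measure `1/n ∑ δ_{x_i}`. -/
def empMeasure {d n : ℕ} (x : Fin n → Euc d) : Measure (Euc d) :=
  (n : ℝ≥0∞)⁻¹ • ∑ i, Measure.dirac (x i)


/-- Lebesgue measure on the unit interval. -/
abbrev lamU : Measure ℝ := volume.restrict (Set.Icc (0 : ℝ) 1)

instance lamU_prob : IsProbabilityMeasure lamU := ⟨by simp [lamU]⟩

lemma ae_lamU : ∀ᵐ u ∂lamU, u ∈ Set.Ioo (0 : ℝ) 1 := by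
  unfold lamU
  rw [← restrict_Ioo_eq_restrict_Icc]
  exact ae_restrict_mem measurableSet_Ioo

lemma quantile_le_iff (ν : Measure ℝ) [IsProbabilityMeasure ν] {u s : ℝ}
    (hu : u ∈ Set.Ioo (0 : ℝ) 1) :
    quantile ν u ≤ s ↔ ENNReal.ofReal u ≤ ν (Set.Iic s) := by
  have hne : {s : ℝ | ENNReal.ofReal u ≤ ν (Set.Iic s)}.Nonempty := by
    have h := tendsto_measure_Iic_atTop ν
    have h1 : ENNReal.ofReal u < ν Set.univ := by
      rw [measure_univ]; exact ENNReal.ofReal_lt_one.2 hu.2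
    obtain ⟨x, hx⟩ := (h.eventually (lt_mem_nhds h1)).exists
    exact ⟨x, hx.le⟩
  have hbd : BddBelow {s : ℝ | ENNReal.ofReal u ≤ ν (Set.Iic s)} := by
    obtain ⟨x, hx⟩ := ((tendsto_cdf_atBot ν).eventually (gt_mem_nhds hu.1)).exists
    replace hx : ν (Set.Iic x) < ENNReal.ofReal u := by
      rw [← ofReal_cdf]
      exact (ENNReal.ofReal_lt_ofReal_iff hu.1).2 hx
    refine ⟨x, fun y hy => ?_⟩
    by_contra hlt
    push Not at hlt
    exact absurd (hy.trans (measure_mono (Set.Iic_subset_Iic.2 hlt.le))) (not_le.2 hx)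
  constructor
  · intro h
    rw [← ofReal_cdf]
    apply ENNReal.ofReal_le_ofReal
    have hr : Tendsto (cdf ν) (𝓝[>] s) (𝓝 (cdf ν s)) :=
      ((cdf ν).right_continuous s).mono_left (nhdsWithin_mono _ Set.Ioi_subset_Ici_self)
    refine ge_of_tendsto hr ?_
    filter_upwards [self_mem_nhdsWithin] with s' hs'
    obtain ⟨a, ha, has⟩ := exists_lt_of_csInf_lt hne (lt_of_le_of_lt h hs')
    have h2 : ENNReal.ofReal u ≤ ENNReal.ofReal (cdf ν s') := by
      rw [ofReal_cdf]
      exact le_trans ha (measure_mono (Set.Iic_subset_Iic.2 has.le))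
    exact (ENNReal.ofReal_le_ofReal_iff (cdf_nonneg _ _)).1 h2
  · intro h
    exact csInf_le hbd h

lemma quantile_aemeas (ν : Measure ℝ) [IsProbabilityMeasure ν] :
    AEMeasurable (quantile ν) lamU := by
  unfold lamU
  rw [← restrict_Ioo_eq_restrict_Icc]
  apply aemeasurable_restrict_of_monotoneOn measurableSet_Ioo
  intro a ha b hb hab
  rw [quantile_le_iff ν ha]
  exact (ENNReal.ofReal_le_ofReal hab).trans ((quantile_le_iff ν hb).1 le_rfl)

lemma quantile_map (ν : Measure ℝ) [IsProbabilityMeasure ν] :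
    lamU.map (quantile ν) = ν := by
  have := Measure.isProbabilityMeasure_map (quantile_aemeas ν)
  apply Measure.ext_of_Iic
  intro s
  rw [Measure.map_apply_of_aemeasurable (quantile_aemeas ν) measurableSet_Iic]
  have h1 : (quantile ν ⁻¹' Set.Iic s : Set ℝ) =ᵐ[lamU] Set.Iic (cdf ν s) := by
    filter_upwards [ae_lamU] with u hu
    apply propext
    change quantile ν u ≤ s ↔ u ≤ cdf ν s
    rw [quantile_le_iff ν hu, ← ofReal_cdf, ENNReal.ofReal_le_ofReal_iff (cdf_nonneg _ _)]
  rw [measure_congr h1, ← ofReal_cdf ν, Measure.restrict_apply measurableSet_Iic]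
  have : Set.Iic (cdf ν s) ∩ Set.Icc 0 1 = Set.Icc 0 (cdf ν s) := by
    ext u
    have := cdf_le_one ν s
    simp only [Set.mem_inter_iff, Set.mem_Iic, Set.mem_Icc]
    constructor
    · rintro ⟨a, b, c⟩; exact ⟨b, a⟩
    · rintro ⟨a, b⟩; exact ⟨b, a, b.trans this⟩
  rw [this]; simp

/-- layer-cake representation of the one-sided square cost -/
lemma cost_layer (π : Measure (ℝ × ℝ)) [IsProbabilityMeasure π] :
    ∫⁻ p, ENNReal.ofReal (p.2 - p.1) * ENNReal.ofReal (p.2 - p.1) ∂π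
      = ∫⁻ z : ℝ × ℝ, π {p | p.1 ≤ min z.1 z.2 ∧ max z.1 z.2 < p.2} := by
  set A : Set ((ℝ × ℝ) × (ℝ × ℝ)) :=
    {w | w.1.1 ≤ min w.2.1 w.2.2 ∧ max w.2.1 w.2.2 < w.1.2} with hA
  have hAm : MeasurableSet A :=
    (measurableSet_le (f := fun w : (ℝ × ℝ) × (ℝ × ℝ) => w.1.1)
      (g := fun w => min w.2.1 w.2.2) (by fun_prop) (by fun_prop)).inter
      (measurableSet_lt (f := fun w : (ℝ × ℝ) × (ℝ × ℝ) => max w.2.1 w.2.2)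
      (g := fun w => w.1.2) (by fun_prop) (by fun_prop))
  have e1 := Measure.prod_apply (μ := π) (ν := (volume : Measure (ℝ × ℝ))) hAm
  have e2 := Measure.prod_apply_symm (μ := π) (ν := (volume : Measure (ℝ × ℝ))) hAm
  have e3 : ∀ p : ℝ × ℝ, (volume : Measure (ℝ × ℝ)) (Prod.mk p ⁻¹' A)
      = ENNReal.ofReal (p.2 - p.1) * ENNReal.ofReal (p.2 - p.1) := by
    intro p
    have : Prod.mk p ⁻¹' A = Set.Ico p.1 p.2 ×ˢ Set.Ico p.1 p.2 := by
      ext z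
      simp only [hA, Set.mem_preimage, Set.mem_ofPred_eq, Set.mem_prod, Set.mem_Ico, le_min_iff,
        max_lt_iff]
      tauto
    rw [this, Measure.volume_eq_prod, Measure.prod_prod, Real.volume_Ico]
  simp_rw [e3] at e1
  rw [← e1, e2]
  rfl

lemma cost_split (a b : ℝ) : ENNReal.ofReal ((a - b) ^ 2)
    = ENNReal.ofReal (b - a) * ENNReal.ofReal (b - a)
      + ENNReal.ofReal (a - b) * ENNReal.ofReal (a - b) := by
  rcases le_total a b with h | h
  · rw [ENNReal.ofReal_of_nonpos (p := a - b) (by linarith),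
      ← ENNReal.ofReal_mul (by linarith)]
    simp; congr 1; ring
  · rw [ENNReal.ofReal_of_nonpos (p := b - a) (by linarith),
      ← ENNReal.ofReal_mul (by linarith)]
    simp; congr 1; ring

lemma coupling_lower (π : Measure (ℝ × ℝ)) [IsProbabilityMeasure π] (a b : ℝ) :
    (π.map Prod.fst) (Set.Iic a) - (π.map Prod.snd) (Set.Iic b)
      ≤ π {p | p.1 ≤ a ∧ b < p.2} := by
  rw [Measure.map_apply measurable_fst measurableSet_Iic,
    Measure.map_apply measurable_snd measurableSet_Iic]
  refine le_measure_sdiff.trans (measure_mono ?_)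
  rintro p ⟨h1, h2⟩
  exact ⟨h1, not_le.1 h2⟩

lemma quantile_upper (ν ρ : Measure ℝ) [IsProbabilityMeasure ν] [IsProbabilityMeasure ρ]
    (a b : ℝ) : lamU {u | quantile ν u ≤ a ∧ b < quantile ρ u}
      ≤ ν (Set.Iic a) - ρ (Set.Iic b) := by
  have h1 : lamU {u | quantile ν u ≤ a ∧ b < quantile ρ u}
      ≤ lamU (Set.Ioc (cdf ρ b) (cdf ν a)) := by
    apply measure_mono_ae
    filter_upwards [ae_lamU] with u hu
    rintro ⟨ha, hb⟩
    have hb' := not_le.2 hb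
    rw [quantile_le_iff ρ hu, ← ofReal_cdf, ENNReal.ofReal_le_ofReal_iff (cdf_nonneg _ _)] at hb'
    rw [quantile_le_iff ν hu, ← ofReal_cdf, ENNReal.ofReal_le_ofReal_iff (cdf_nonneg _ _)] at ha
    exact ⟨not_le.1 hb', ha⟩
  refine h1.trans ((Measure.restrict_apply_le _ _).trans ?_)
  rw [Real.volume_Ioc, ENNReal.ofReal_sub _ (cdf_nonneg _ _), ofReal_cdf, ofReal_cdf]

lemma half_le (π : Measure (ℝ × ℝ)) [IsProbabilityMeasure π] :
    ∫⁻ u, ENNReal.ofReal (quantile (π.map Prod.snd) u - quantile (π.map Prod.fst) u)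
      * ENNReal.ofReal (quantile (π.map Prod.snd) u - quantile (π.map Prod.fst) u) ∂lamU
      ≤ ∫⁻ p, ENNReal.ofReal (p.2 - p.1) * ENNReal.ofReal (p.2 - p.1) ∂π := by
  have i1 : IsProbabilityMeasure (π.map Prod.fst) :=
    Measure.isProbabilityMeasure_map measurable_fst.aemeasurable
  have i2 : IsProbabilityMeasure (π.map Prod.snd) :=
    Measure.isProbabilityMeasure_map measurable_snd.aemeasurable
  set ν := π.map Prod.fst with hν
  set ρ := π.map Prod.snd with hρ
  have hm : AEMeasurable (fun u => (quantile ν u, quantile ρ u)) lamU :=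
    (quantile_aemeas ν).prodMk (quantile_aemeas ρ)
  have i3 : IsProbabilityMeasure (lamU.map (fun u => (quantile ν u, quantile ρ u))) :=
    Measure.isProbabilityMeasure_map hm
  have e := cost_layer (lamU.map (fun u => (quantile ν u, quantile ρ u)))
  rw [lintegral_map' (by fun_prop) hm] at e
  rw [e, cost_layer]
  apply lintegral_mono
  intro z
  have hs : MeasurableSet {p : ℝ × ℝ | p.1 ≤ min z.1 z.2 ∧ max z.1 z.2 < p.2} :=
    (measurableSet_le (f := fun p : ℝ × ℝ => p.1)
      (g := fun _ => min z.1 z.2) (by fun_prop) (by fun_prop)).inter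
      (measurableSet_lt (f := fun _ : ℝ × ℝ => max z.1 z.2)
      (g := fun p => p.2) (by fun_prop) (by fun_prop))
  dsimp only
  rw [Measure.map_apply_of_aemeasurable hm hs]
  exact (quantile_upper ν ρ _ _).trans (coupling_lower π _ _)

lemma oneD (π : Measure (ℝ × ℝ)) [IsProbabilityMeasure π] :
    ∫⁻ u, ENNReal.ofReal ((quantile (π.map Prod.fst) u - quantile (π.map Prod.snd) u) ^ 2) ∂lamU
      ≤ ∫⁻ p, ENNReal.ofReal ((p.1 - p.2) ^ 2) ∂π := by
  have i1 : IsProbabilityMeasure (π.map Prod.fst) :=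
    Measure.isProbabilityMeasure_map measurable_fst.aemeasurable
  have i2 : IsProbabilityMeasure (π.map Prod.snd) :=
    Measure.isProbabilityMeasure_map measurable_snd.aemeasurable
  have m1 := quantile_aemeas (π.map Prod.fst)
  have m2 := quantile_aemeas (π.map Prod.snd)
  simp_rw [cost_split]
  rw [lintegral_add_left' (by fun_prop), lintegral_add_left' (by fun_prop)]
  refine add_le_add (half_le π) ?_
  have i3 : IsProbabilityMeasure (π.map Prod.swap) :=
    Measure.isProbabilityMeasure_map measurable_swap.aemeasurable
  have h := half_le (π.map Prod.swap)
  rw [Measure.map_map measurable_fst measurable_swap,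
    Measure.map_map measurable_snd measurable_swap,
    lintegral_map (by fun_prop) measurable_swap] at h
  exact h


lemma tCost_swap {d : ℕ} (π : Measure (Euc d × Euc d)) :
    tCost (π.map Prod.swap) = tCost π := by
  unfold tCost
  rw [integral_map measurable_swap.aemeasurable (by fun_prop)]
  simp_rw [Prod.fst_swap, Prod.snd_swap, norm_sub_rev]

lemma coupling_swap {d : ℕ} {μ ν : Measure (Euc d)} {π : Measure (Euc d × Euc d)}
    (h : π ∈ Coupling μ ν) : π.map Prod.swap ∈ Coupling ν μ := by
  obtain ⟨i, h1, h2⟩ := h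
  refine ⟨Measure.isProbabilityMeasure_map measurable_swap.aemeasurable, ?_, ?_⟩
  · rw [Measure.map_map measurable_fst measurable_swap]; exact h2
  · rw [Measure.map_map measurable_snd measurable_swap]; exact h1

lemma W2sq_comm {d : ℕ} (μ ν : Measure (Euc d)) : W2sq μ ν = W2sq ν μ := by
  have key : ∀ μ ν : Measure (Euc d), tCost '' Coupling μ ν ⊆ tCost '' Coupling ν μ := by
    rintro μ ν _ ⟨π, hπ, rfl⟩
    exact ⟨_, coupling_swap hπ, tCost_swap π⟩
  unfold W2sq
  rw [Set.Subset.antisymm (key μ ν) (key ν μ)]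

lemma W2sq_le {d : ℕ} {μ ν : Measure (Euc d)} {π : Measure (Euc d × Euc d)}
    (h : π ∈ Coupling μ ν) : W2sq μ ν ≤ tCost π := by
  refine csInf_le ⟨0, ?_⟩ ⟨π, h, rfl⟩
  rintro _ ⟨π', -, rfl⟩
  exact integral_nonneg fun p => by positivity

lemma le_W2sq {d : ℕ} {μ ν : Measure (Euc d)} [IsProbabilityMeasure μ] [IsProbabilityMeasure ν]
    {c : ℝ} (h : ∀ π ∈ Coupling μ ν, c ≤ tCost π) : c ≤ W2sq μ ν := by
  refine le_csInf ⟨_, μ.prod ν, ⟨inferInstance, ?_, ?_⟩, rfl⟩ ?_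
  · simp
  · simp
  · rintro _ ⟨π, hπ, rfl⟩
    exact h π hπ

lemma projLine_prob {d : ℕ} (θ : Euc d) (μ : Measure (Euc d)) [IsProbabilityMeasure μ] :
    IsProbabilityMeasure (projLine θ μ) :=
  Measure.isProbabilityMeasure_map (by fun_prop)

lemma quantile_memLp {d : ℕ} (θ : Euc d) {μ : Measure (Euc d)}
    (h : μ ∈ (P2 : Set (Measure (Euc d)))) :
    MemLp (quantile (projLine θ μ)) 2 lamU := by
  obtain ⟨i, hi⟩ := h
  have := projLine_prob θ μ
  have hm := quantile_aemeas (projLine θ μ)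
  have h1 : MemLp (id : ℝ → ℝ) 2 (lamU.map (quantile (projLine θ μ))) := by
    rw [quantile_map]
    unfold projLine
    rw [memLp_map_measure_iff (by fun_prop) (by fun_prop)]
    have h2 : MemLp (id : Euc d → Euc d) 2 μ :=
      (memLp_two_iff_integrable_sq_norm (by fun_prop)).2 hi
    exact h2.const_inner θ
  exact (memLp_map_measure_iff (by fun_prop) hm).1 h1

lemma inner_aux {d : ℕ} {θ : Euc d} (hθ : ‖θ‖ = 1) (c : ℝ) : ⟪θ, c • θ⟫ = c := by
  rw [real_inner_smul_right, real_inner_self_eq_norm_sq, hθ]; ring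

lemma norm_aux {d : ℕ} {θ : Euc d} (hθ : ‖θ‖ = 1) (a : ℝ) (y : Euc d) :
    ‖a • θ - y‖ ^ 2 = (a - ⟪θ, y⟫) ^ 2 + ‖y - ⟪θ, y⟫ • θ‖ ^ 2 := by
  rw [norm_sub_sq_real, norm_sub_sq_real, norm_smul, norm_smul, hθ, real_inner_smul_left,
    real_inner_smul_right, real_inner_comm θ y]
  simp only [Real.norm_eq_abs, mul_one, sq_abs]
  ring

lemma projQ_P2 {d : ℕ} {μ : Measure (Euc d)} {θ : Euc d} (hθ : ‖θ‖ = 1)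
    (h : μ ∈ (P2 : Set (Measure (Euc d)))) :
    μ.map (fun x => ⟪θ, x⟫ • θ) ∈ (P2 : Set (Measure (Euc d))) := by
  obtain ⟨i, hi⟩ := h
  refine ⟨Measure.isProbabilityMeasure_map (by fun_prop), ?_⟩
  rw [integrable_map_measure (by fun_prop) (by fun_prop)]
  refine hi.mono' (by fun_prop) (ae_of_all _ fun x => ?_)
  have := abs_real_inner_le_norm θ x
  rw [hθ, one_mul] at this
  simp only [Function.comp, norm_smul, hθ, mul_one, Real.norm_eq_abs, abs_pow, abs_abs]
  gcongr

lemma LB {d : ℕ} {μ1 μ : Measure (Euc d)} {θ : Euc d} (hθ : ‖θ‖ = 1)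
    (h1 : μ1 ∈ (P2 : Set (Measure (Euc d)))) (h : μ ∈ (P2 : Set (Measure (Euc d)))) :
    ∫ u, (quantile (projLine θ μ1) u - quantile (projLine θ μ) u) ^ 2 ∂lamU
      + ∫ y, ‖y - ⟪θ, y⟫ • θ‖ ^ 2 ∂μ ≤ W2sq (μ1.map (fun x => ⟪θ, x⟫ • θ)) μ := by
  have hQ := projQ_P2 hθ h1
  have i0 := h1.1
  have i1 := hQ.1
  have i2 := h.1
  apply le_W2sq
  rintro π ⟨ip, hp1, hp2⟩
  -- moments under `π`
  have hx : MemLp (fun p : Euc d × Euc d => p.1) 2 π := by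
    have : MemLp (id : Euc d → Euc d) 2 (π.map Prod.fst) := by
      rw [hp1]; exact (memLp_two_iff_integrable_sq_norm (by fun_prop)).2 hQ.2
    exact (memLp_map_measure_iff (f := Prod.fst) (g := id) (by fun_prop) (by fun_prop)).1 this
  have hy : MemLp (fun p : Euc d × Euc d => p.2) 2 π := by
    have : MemLp (id : Euc d → Euc d) 2 (π.map Prod.snd) := by
      rw [hp2]; exact (memLp_two_iff_integrable_sq_norm (by fun_prop)).2 h.2
    exact (memLp_map_measure_iff (f := Prod.snd) (g := id) (by fun_prop) (by fun_prop)).1 this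
  have hline : ∀ᵐ p ∂π, p.1 = ⟪θ, p.1⟫ • θ := by
    have hs : MeasurableSet {x : Euc d | x = ⟪θ, x⟫ • θ} :=
      measurableSet_eq_fun (by fun_prop) (by fun_prop)
    have : ∀ᵐ x ∂(π.map Prod.fst), x = ⟪θ, x⟫ • θ := by
      rw [hp1, ae_map_iff (by fun_prop) hs]
      exact ae_of_all _ fun x => by rw [inner_aux hθ]
    exact ae_of_ae_map (by fun_prop) this
  have hA : MemLp (fun p : Euc d × Euc d => ⟪θ, p.1⟫ - ⟪θ, p.2⟫) 2 π :=
    (hx.const_inner θ).sub (hy.const_inner θ)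
  have hA' : Integrable (fun p : Euc d × Euc d => (⟪θ, p.1⟫ - ⟪θ, p.2⟫) ^ 2) π := hA.integrable_sq
  have hC : Integrable (fun p : Euc d × Euc d => ‖p.1 - p.2‖ ^ 2) π :=
    (memLp_two_iff_integrable_sq_norm (by fun_prop)).1 (hx.sub hy)
  have hcost : ∀ᵐ p ∂π, ‖p.1 - p.2‖ ^ 2
      = (⟪θ, p.1⟫ - ⟪θ, p.2⟫) ^ 2 + ‖p.2 - ⟪θ, p.2⟫ • θ‖ ^ 2 := by
    filter_upwards [hline] with p hp
    conv_lhs => rw [hp]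
    exact norm_aux hθ _ _
  have hB : Integrable (fun p : Euc d × Euc d => ‖p.2 - ⟪θ, p.2⟫ • θ‖ ^ 2) π := by
    refine (hC.sub hA').congr ?_
    filter_upwards [hcost] with p hp
    simp only [Pi.sub_apply]
    linarith
  have e1 : tCost π = ∫ p, (⟪θ, p.1⟫ - ⟪θ, p.2⟫) ^ 2 ∂π
      + ∫ y, ‖y - ⟪θ, y⟫ • θ‖ ^ 2 ∂μ := by
    unfold tCost
    rw [integral_congr_ae hcost, integral_add hA' hB, ← hp2,
      integral_map (by fun_prop) (by fun_prop)]
  rw [e1]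
  gcongr
  -- the one-dimensional inequality
  have hm : Measurable (fun p : Euc d × Euc d => (⟪θ, p.1⟫, ⟪θ, p.2⟫)) := by fun_prop
  have i3 : IsProbabilityMeasure (π.map (fun p : Euc d × Euc d => (⟪θ, p.1⟫, ⟪θ, p.2⟫))) :=
    Measure.isProbabilityMeasure_map hm.aemeasurable
  have key := oneD (π.map (fun p : Euc d × Euc d => (⟪θ, p.1⟫, ⟪θ, p.2⟫)))
  have f1 : (π.map (fun p : Euc d × Euc d => (⟪θ, p.1⟫, ⟪θ, p.2⟫))).map Prod.fst
      = projLine θ μ1 := by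
    rw [Measure.map_map measurable_fst hm]
    have : (Prod.fst ∘ fun p : Euc d × Euc d => (⟪θ, p.1⟫, ⟪θ, p.2⟫))
      = (fun x => ⟪θ, x⟫) ∘ Prod.fst := rfl
    rw [this, ← Measure.map_map (by fun_prop) measurable_fst, hp1,
      Measure.map_map (by fun_prop) (by fun_prop)]
    unfold projLine
    congr 1
    funext x
    simp only [Function.comp, inner_aux hθ]
  have f2 : (π.map (fun p : Euc d × Euc d => (⟪θ, p.1⟫, ⟪θ, p.2⟫))).map Prod.snd
      = projLine θ μ := by
    rw [Measure.map_map measurable_snd hm]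
    have : (Prod.snd ∘ fun p : Euc d × Euc d => (⟪θ, p.1⟫, ⟪θ, p.2⟫))
      = (fun x => ⟪θ, x⟫) ∘ Prod.snd := rfl
    rw [this, ← Measure.map_map (by fun_prop) measurable_snd, hp2]
    rfl
  rw [f1, f2, lintegral_map (by fun_prop) hm] at key
  have hq : MemLp (fun u => quantile (projLine θ μ1) u - quantile (projLine θ μ) u) 2 lamU :=
    (quantile_memLp θ h1).sub (quantile_memLp θ h)
  rw [← ofReal_integral_eq_lintegral_ofReal hq.integrable_sq (ae_of_all _ fun u => sq_nonneg _),
    ← ofReal_integral_eq_lintegral_ofReal hA' (ae_of_all _ fun u => sq_nonneg _)] at key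
  exact (ENNReal.ofReal_le_ofReal_iff (integral_nonneg fun p => sq_nonneg _)).1 key

/-- explicit coupling between a projected measure and a measure on the line -/
lemma UB {d : ℕ} {μ1 : Measure (Euc d)} {θ : Euc d} (hθ : ‖θ‖ = 1)
    (h1 : μ1 ∈ (P2 : Set (Measure (Euc d)))) {g : ℝ → ℝ} (hg : AEMeasurable g lamU) :
    W2sq (μ1.map (fun x => ⟪θ, x⟫ • θ)) (lamU.map (fun u => g u • θ))
      ≤ ∫ u, (quantile (projLine θ μ1) u - g u) ^ 2 ∂lamU := by
  have i1 := h1.1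
  have i2 := projLine_prob θ μ1
  have hq := quantile_aemeas (projLine θ μ1)
  have hm : AEMeasurable (fun u => (quantile (projLine θ μ1) u • θ, g u • θ)) lamU :=
    (hq.smul_const θ).prodMk (hg.smul_const θ)
  have hc : lamU.map (fun u => (quantile (projLine θ μ1) u • θ, g u • θ))
      ∈ Coupling (μ1.map (fun x => ⟪θ, x⟫ • θ)) (lamU.map (fun u => g u • θ)) := by
    refine ⟨Measure.isProbabilityMeasure_map hm, ?_, ?_⟩
    · rw [AEMeasurable.map_map_of_aemeasurable (by fun_prop) hm]
      have e : (μ1.map (fun x => ⟪θ, x⟫ • θ)) = (projLine θ μ1).map (fun c => c • θ) := by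
        unfold projLine
        rw [Measure.map_map (by fun_prop) (by fun_prop)]
        rfl
      rw [e]
      conv_rhs => rw [← quantile_map (projLine θ μ1)]
      rw [AEMeasurable.map_map_of_aemeasurable (by fun_prop) hq]
      rfl
    · rw [AEMeasurable.map_map_of_aemeasurable (by fun_prop) hm]
      rfl
  refine (W2sq_le hc).trans (le_of_eq ?_)
  unfold tCost
  rw [integral_map hm (by fun_prop)]
  congr 1
  funext u
  simp only [← sub_smul, norm_smul, hθ, mul_one, Real.norm_eq_abs, sq_abs]

/-- the Wasserstein mean of the projected measures `Q_θ#μ1` and `Q_θ#μ2`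
is unique and given by the explicit quantile formula `pivotMiddle θ μ1 μ2`. -/
theorem WMean_proj_singleton {d : ℕ} (μ1 μ2 : Measure (Euc d))
    (h1 : μ1 ∈ (P2 : Set (Measure (Euc d)))) (h2 : μ2 ∈ (P2 : Set (Measure (Euc d))))
    (θ : Euc d) (hθ : ‖θ‖ = 1) :
    WMean (μ1.map (fun x => ⟪θ, x⟫ • θ)) (μ2.map (fun x => ⟪θ, x⟫ • θ))
      = {pivotMiddle θ μ1 μ2} := by
  have i1 := h1.1
  have i2 := h2.1
  have j1 := projLine_prob θ μ1
  have j2 := projLine_prob θ μ2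
  have k1 := (projQ_P2 hθ h1).1
  have k2 := (projQ_P2 hθ h2).1
  set q1 := quantile (projLine θ μ1) with hq1
  set q2 := quantile (projLine θ μ2) with hq2
  have m1 : MemLp q1 2 lamU := quantile_memLp θ h1
  have m2 : MemLp q2 2 lamU := quantile_memLp θ h2
  set g : ℝ → ℝ := fun t => (1 / 2) * q1 t + (1 / 2) * q2 t with hg
  have mg : MemLp g 2 lamU := (m1.const_mul _).add (m2.const_mul _)
  have hpm : pivotMiddle θ μ1 μ2 = lamU.map (fun t => g t • θ) := rfl
  have hgm : AEMeasurable g lamU := mg.1.aemeasurable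
  have hpP2 : pivotMiddle θ μ1 μ2 ∈ (P2 : Set (Measure (Euc d))) := by
    rw [hpm]
    refine ⟨Measure.isProbabilityMeasure_map (hgm.smul_const θ), ?_⟩
    rw [integrable_map_measure (by fun_prop) (hgm.smul_const θ)]
    refine mg.integrable_sq.congr (ae_of_all _ fun u => ?_)
    simp only [Function.comp, norm_smul, hθ, mul_one, Real.norm_eq_abs, sq_abs]
  set D : ℝ := ∫ u, (q1 u - q2 u) ^ 2 ∂lamU with hD
  -- upper bound at the pivot
  have ub : W2sq (μ1.map (fun x => ⟪θ, x⟫ • θ)) (pivotMiddle θ μ1 μ2)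
      + W2sq (pivotMiddle θ μ1 μ2) (μ2.map (fun x => ⟪θ, x⟫ • θ)) ≤ 1 / 2 * D := by
    have u1 := UB hθ h1 hgm
    have u2 := UB hθ h2 hgm
    rw [← hpm] at u1 u2
    rw [W2sq_comm] at u2
    have e1 : ∫ u, (q1 u - g u) ^ 2 ∂lamU = 1 / 4 * D := by
      rw [hD, ← integral_const_mul]
      congr 1
      funext u
      simp only [hg]
      ring
    have e2 : ∫ u, (q2 u - g u) ^ 2 ∂lamU = 1 / 4 * D := by
      rw [hD, ← integral_const_mul]
      congr 1
      funext u
      simp only [hg]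
      ring
    rw [e1] at u1
    rw [e2] at u2
    linarith
  -- lower bound
  have lb : ∀ μ ∈ (P2 : Set (Measure (Euc d))),
      1 / 2 * D + 2 * ∫ u, (quantile (projLine θ μ) u - g u) ^ 2 ∂lamU
        + 2 * ∫ y, ‖y - ⟪θ, y⟫ • θ‖ ^ 2 ∂μ
      ≤ W2sq (μ1.map (fun x => ⟪θ, x⟫ • θ)) μ + W2sq μ (μ2.map (fun x => ⟪θ, x⟫ • θ)) := by
    intro μ hμ
    have l1 := LB hθ h1 hμ
    have l2 := LB hθ h2 hμ
    rw [W2sq_comm] at l2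
    have mq : MemLp (quantile (projLine θ μ)) 2 lamU := quantile_memLp θ hμ
    set q := quantile (projLine θ μ)
    have a1 : Integrable (fun u => (q1 u - q u) ^ 2) lamU := (m1.sub mq).integrable_sq
    have a2 : Integrable (fun u => (q2 u - q u) ^ 2) lamU := (m2.sub mq).integrable_sq
    have a3 : Integrable (fun u => (q1 u - q2 u) ^ 2) lamU := (m1.sub m2).integrable_sq
    have a4 : Integrable (fun u => (q u - g u) ^ 2) lamU := (mq.sub mg).integrable_sq
    have e : ∫ u, (q1 u - q u) ^ 2 ∂lamU + ∫ u, (q2 u - q u) ^ 2 ∂lamU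
        = 1 / 2 * D + 2 * ∫ u, (q u - g u) ^ 2 ∂lamU := by
      rw [hD, ← integral_const_mul, ← integral_const_mul, ← integral_add a1 a2,
        ← integral_add (a3.const_mul _) (a4.const_mul _)]
      congr 1
      funext u
      simp only [hg]
      ring
    linarith
  have nn1 : ∀ μ : Measure (Euc d), 0 ≤ ∫ u, (quantile (projLine θ μ) u - g u) ^ 2 ∂lamU :=
    fun μ => integral_nonneg fun u => sq_nonneg _
  have nn2 : ∀ μ : Measure (Euc d), 0 ≤ ∫ y, ‖y - ⟪θ, y⟫ • θ‖ ^ 2 ∂μ :=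
    fun μ => integral_nonneg fun u => sq_nonneg _
  ext μ
  rw [Set.mem_singleton_iff]
  constructor
  · rintro ⟨hμ, hmin⟩
    have b1 := hmin _ hpP2
    have b2 := lb μ hμ
    have z1 : ∫ u, (quantile (projLine θ μ) u - g u) ^ 2 ∂lamU = 0 := by
      linarith [nn1 μ, nn2 μ]
    have z2 : ∫ y, ‖y - ⟪θ, y⟫ • θ‖ ^ 2 ∂μ = 0 := by
      linarith [nn1 μ, nn2 μ]
    have i3 := hμ.1
    have j3 := projLine_prob θ μ
    have mq : MemLp (quantile (projLine θ μ)) 2 lamU := quantile_memLp θ hμ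
    have my : MemLp (id : Euc d → Euc d) 2 μ :=
      (memLp_two_iff_integrable_sq_norm (by fun_prop)).2 hμ.2
    have my2 : MemLp (fun y : Euc d => y - ⟪θ, y⟫ • θ) 2 μ := by
      refine my.sub ?_
      refine MemLp.of_le my (by fun_prop) (ae_of_all _ fun y => ?_)
      rw [norm_smul, hθ, mul_one]
      have := norm_inner_le_norm (𝕜 := ℝ) θ y
      rwa [hθ, one_mul] at this
    have w1 : quantile (projLine θ μ) =ᵐ[lamU] g := by
      have := (integral_eq_zero_iff_of_nonneg (fun u => sq_nonneg _)
        (mq.sub mg).integrable_sq).1 z1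
      filter_upwards [this] with u hu
      have := pow_eq_zero_iff (two_ne_zero) |>.1 hu
      simp only [Pi.sub_apply] at this
      linarith
    have w2 : ∀ᵐ y ∂μ, ⟪θ, y⟫ • θ = y := by
      have := (integral_eq_zero_iff_of_nonneg (fun u => sq_nonneg _)
        ((memLp_two_iff_integrable_sq_norm my2.1).1 my2)).1 z2
      filter_upwards [this] with y hy
      have := pow_eq_zero_iff (two_ne_zero) |>.1 hy
      exact (sub_eq_zero.1 (norm_eq_zero.1 this)).symm
    calc μ = μ.map id := Measure.map_id.symm
      _ = μ.map (fun y => ⟪θ, y⟫ • θ) := by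
          apply Measure.map_congr
          filter_upwards [w2] with y hy
          exact hy.symm
      _ = (projLine θ μ).map (fun c => c • θ) := by
          unfold projLine
          rw [Measure.map_map (by fun_prop) (by fun_prop)]
          rfl
      _ = (lamU.map (quantile (projLine θ μ))).map (fun c => c • θ) := by rw [quantile_map]
      _ = lamU.map (fun t => quantile (projLine θ μ) t • θ) := by
          rw [AEMeasurable.map_map_of_aemeasurable (by fun_prop) (quantile_aemeas _)]
          rfl
      _ = pivotMiddle θ μ1 μ2 := by
          rw [hpm]
          apply Measure.map_congr
          filter_upwards [w1] with u hu
          rw [hu]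
  · rintro rfl
    refine ⟨hpP2, fun μ' hμ' => ?_⟩
    have := lb μ' hμ'
    linarith [nn1 μ', nn2 μ']

end
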